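/- No finite nonabelian group has the strong CFS property; equivalently, every finite group with the strong CFS property is abelian. -/

import Mathlib

/-- `G = A · B`: every element of `G` can be written in exactly one way as `a * b`
with `a ∈ A` and `b ∈ B`. -/
def IsDirectProd {G : Type*} [Group G] (A B : Set G) : Prop :=
  ∀ g : G, ∃! p : G × G, p.1 ∈ A ∧ p.2 ∈ B ∧ p.1 * p.2 = g

/-- `A` is a left factor of `G`: there is `B ⊆ G` with `G = A · B`. -/
def IsLeftFactor {G : Type*} [Group G] (A : Set G) : Prop :=
  ∃ B : Set G, IsDirectProd A B

/-- `A` is a right factor of `G`: there is `B ⊆ G` with `G = B · A`. -/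
def IsRightFactor {G : Type*} [Group G] (A : Set G) : Prop :=
  ∃ B : Set G, IsDirectProd B A

/-- `A` is a factor of `G`: it is a left factor or a right factor of `G`. -/
def IsFactor {G : Type*} [Group G] (A : Set G) : Prop :=
  IsLeftFactor A ∨ IsRightFactor A

/-- A group `G` has the strong CFS property if every Lagrange subset of `G`
(i.e. every subset whose cardinality divides `|G|`) is a factor of `G`. -/
def HasStrongCFS (G : Type*) [Group G] : Prop :=
  ∀ A : Set G, Nat.card A ∣ Nat.card G → IsFactor A

/-!
If `A⁻¹ * A = A * A⁻¹ = G`, then `A` is a factor only for `A = G`: in `G = A · B`, any two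
`b, c ∈ B` satisfy `b * c⁻¹ = x⁻¹ * y` with `x, y ∈ A`, so `x * b = y * c` forces `b = c`. Such an
`A` is obtained from a normal subgroup `Z` by adding an element of each coset of `Z`, up
to inversion of cosets. Padding `A` to a proper Lagrange subset refutes the strong CFS property

* for `|G| = pⁿ` with `p` odd and `n ≥ 3`, where `|Z| = p` and `Z` has odd index, so that half of
  the nontrivial cosets suffice;
* for `|G| = 8` and `a ∈ G` of order `4`, with `Z = ⟨a²⟩` and `A = Z ∪ {t, a * t}` for some
  `t ∉ ⟨a⟩`: the only coset avoided by `A` is `{a, a⁻¹}`, which consists of quotients of `t` and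
  `a * t`.

The property passes to subgroups and forces prime power order, so what remains are groups of order
at most `p²` and groups of exponent dividing `2`.
-/

open scoped Pointwise

section Factors

variable {G H : Type*} [Group G] [Group H] {A B : Set G}

lemma isDirectProd_iff_isComplement : IsDirectProd A B ↔ Subgroup.IsComplement A B := by
  rw [Subgroup.isComplement_iff_existsUnique]
  refine forall_congr' fun g => ⟨?_, ?_⟩
  · rintro ⟨⟨a, b⟩, ⟨ha, hb, rfl⟩, huniq⟩
    refine ⟨(⟨a, ha⟩, ⟨b, hb⟩), rfl, fun x hx => ?_⟩
    have hxab := huniq (x.1, x.2) ⟨x.1.2, x.2.2, hx⟩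
    exact Prod.ext (Subtype.ext congr(($hxab).1)) (Subtype.ext congr(($hxab).2))
  · rintro ⟨⟨a, b⟩, rfl, huniq⟩
    refine ⟨(a, b), ⟨a.2, b.2, rfl⟩, ?_⟩
    rintro ⟨x, y⟩ ⟨hx, hy, hxy⟩
    have hxyab := huniq (⟨x, hx⟩, ⟨y, hy⟩) hxy
    exact Prod.ext congr((($hxyab).1 : G)) congr((($hxyab).2 : G))

lemma IsDirectProd.inv (h : IsDirectProd A B) : IsDirectProd B⁻¹ A⁻¹ := by
  intro g
  obtain ⟨⟨a, b⟩, ⟨ha, hb, hab⟩, huniq⟩ := h g⁻¹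
  refine ⟨(b⁻¹, a⁻¹), ⟨Set.inv_mem_inv.2 hb, Set.inv_mem_inv.2 ha, ?_⟩, ?_⟩
  · rw [← mul_inv_rev, hab, inv_inv]
  · rintro ⟨x, y⟩ ⟨hx, hy, rfl⟩
    have hyx := huniq (y⁻¹, x⁻¹) ⟨hy, hx, (mul_inv_rev x y).symm⟩
    exact Prod.ext (inv_eq_iff_eq_inv.1 congr(($hyx).2)) (inv_eq_iff_eq_inv.1 congr(($hyx).1))

lemma isRightFactor_iff_isLeftFactor_inv : IsRightFactor A ↔ IsLeftFactor A⁻¹ :=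
  ⟨fun ⟨B, h⟩ => ⟨B⁻¹, h.inv⟩, fun ⟨B, h⟩ => ⟨B⁻¹, by simpa only [inv_inv] using h.inv⟩⟩

lemma IsLeftFactor.of_image {f : H →* G} (hf : Function.Injective f) {A : Set H}
    (h : IsLeftFactor (f '' A)) : IsLeftFactor A := by
  obtain ⟨B, h⟩ := h
  refine ⟨f ⁻¹' B, fun g => ?_⟩
  obtain ⟨⟨_, b⟩, ⟨⟨a, ha, rfl⟩, hb, hab⟩, huniq⟩ := h (f g)
  obtain rfl : b = f (a⁻¹ * g) := by rw [map_mul, map_inv, ← hab, inv_mul_cancel_left]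
  refine ⟨(a, a⁻¹ * g), ⟨ha, hb, mul_inv_cancel_left a g⟩, ?_⟩
  rintro ⟨x, y⟩ ⟨hx, hy, rfl⟩
  have hxy := huniq (f x, f y) ⟨Set.mem_image_of_mem f hx, hy, (map_mul f x y).symm⟩
  exact Prod.ext (hf congr(($hxy).1)) (hf congr(($hxy).2))

lemma IsFactor.of_image {f : H →* G} (hf : Function.Injective f) {A : Set H}
    (h : IsFactor (f '' A)) : IsFactor A := by
  refine h.imp (IsLeftFactor.of_image hf) fun h => ?_
  rw [isRightFactor_iff_isLeftFactor_inv] at h ⊢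
  exact .of_image hf (by rwa [Set.image_inv])

lemma IsFactor.natCard_dvd (h : IsFactor A) : Nat.card A ∣ Nat.card G := by
  rcases h with ⟨B, h⟩ | ⟨B, h⟩ <;> rw [isDirectProd_iff_isComplement] at h
  · exact h.card_mul_card ▸ dvd_mul_right _ _
  · exact h.card_mul_card ▸ dvd_mul_left _ _

lemma IsLeftFactor.eq_univ (h : IsLeftFactor A) (hA : A⁻¹ * A = Set.univ) : A = Set.univ := by
  obtain ⟨B, h⟩ := h
  have hcompl := isDirectProd_iff_isComplement.1 h
  have hB : B.Subsingleton := by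
    intro b hb c hc
    obtain ⟨x, hx, y, hy, hxy⟩ := Set.mem_mul.1 (hA.symm ▸ Set.mem_univ (b * c⁻¹))
    have heq : x⁻¹ * b = y * c := by
      rw [inv_mul_eq_iff_eq_mul, ← mul_assoc, hxy, inv_mul_cancel_right]
    have hpair := (h (y * c)).unique (y₁ := (x⁻¹, b)) (y₂ := (y, c)) ⟨hx, hb, heq⟩ ⟨hy, hc, rfl⟩
    exact congr(($hpair).2)
  obtain ⟨b, rfl⟩ := Set.exists_eq_singleton_iff_nonempty_subsingleton.2
    ⟨hcompl.nonempty_right, hB⟩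
  exact Subgroup.isComplement_singleton_right.1 hcompl

lemma IsFactor.eq_univ (h : IsFactor A) (hl : A⁻¹ * A = Set.univ) (hr : A * A⁻¹ = Set.univ) :
    A = Set.univ := by
  rcases h with h | h
  · exact h.eq_univ hl
  · rw [isRightFactor_iff_isLeftFactor_inv] at h
    rw [← inv_inv A, h.eq_univ (by rwa [inv_inv]), Set.inv_univ]

end Factors

section StrongCFS

variable {G H : Type*} [Group G] [Group H]

lemma HasStrongCFS.of_injective (h : HasStrongCFS G) {f : H →* G} (hf : Function.Injective f) :
    HasStrongCFS H := fun A hA =>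
  .of_image hf <| h _ <| by
    rw [Nat.card_image_of_injective hf]
    exact hA.trans (Subgroup.card_dvd_of_injective f hf)

lemma HasStrongCFS.dvd_card_subgroup (h : HasStrongCFS G) (K : Subgroup G) {d : ℕ}
    (hd : d ∣ Nat.card G) (hdK : d ≤ Nat.card K) : d ∣ Nat.card K := by
  obtain ⟨A, -, rfl⟩ := Set.exists_subset_card_eq ((Set.ncard_univ K).symm ▸ hdK)
  refine IsFactor.natCard_dvd (.of_image K.subtype_injective (h _ ?_))
  rwa [Nat.card_image_of_injective K.subtype_injective]

/-- If `p < q` are prime divisors of `|G|`, a set of `p` elements inside a subgroup of order `q`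
would be a factor of that subgroup. -/
lemma HasStrongCFS.exists_card_eq_prime_pow [Finite G] (h : HasStrongCFS G) :
    ∃ p, p.Prime ∧ ∃ n, Nat.card G = p ^ n := by
  have le {p q : ℕ} (hp : p.Prime) (hq : q.Prime) (hpG : p ∣ Nat.card G)
      (hqG : q ∣ Nat.card G) : q ≤ p := by
    by_contra! hlt
    have : Fact q.Prime := ⟨hq⟩
    obtain ⟨x, rfl⟩ := exists_prime_orderOf_dvd_card' q hqG
    have hdvd := h.dvd_card_subgroup (.zpowers x) hpG (by simpa using hlt.le)
    rw [Nat.card_zpowers, Nat.prime_dvd_prime_iff_eq hp hq] at hdvd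
    exact hlt.ne hdvd
  rcases eq_or_ne (Nat.card G) 1 with hG | hG
  · exact ⟨2, Nat.prime_two, 0, hG⟩
  · obtain ⟨p, hp, hpG⟩ := Nat.exists_prime_and_dvd hG
    exact ⟨p, hp, _, Nat.eq_prime_pow_of_unique_prime_dvd Nat.card_pos.ne' fun hq hqG =>
      le_antisymm (le hp hq hpG hqG) (le hq hp hqG hpG)⟩

lemma not_hasStrongCFS_of_ncard_le [Finite G] {A : Set G} {m : ℕ} (hAm : A.ncard ≤ m)
    (hmG : m ∣ Nat.card G) (hm : m ≠ Nat.card G) (hl : A⁻¹ * A = Set.univ)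
    (hr : A * A⁻¹ = Set.univ) : ¬HasStrongCFS G := by
  intro h
  obtain ⟨A', hAA', -, rfl⟩ := Set.exists_subsuperset_card_eq A.subset_univ hAm
    ((Set.ncard_univ G).symm ▸ Nat.le_of_dvd Nat.card_pos hmG)
  have hA' : A' = Set.univ := (h A' hmG).eq_univ
    (Set.univ_subset_iff.1 (hl ▸ Set.mul_subset_mul (Set.inv_subset_inv.2 hAA') hAA'))
    (Set.univ_subset_iff.1 (hr ▸ Set.mul_subset_mul hAA' (Set.inv_subset_inv.2 hAA')))
  exact hm (by rw [hA', Set.ncard_univ])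

lemma inv_mul_self_eq_univ_of_subset {Z : Subgroup G} {A : Set G} (hZA : (Z : Set G) ⊆ A)
    (hcover : ∀ g, g ∈ (Z : Set G) * A ∨ g⁻¹ ∈ (Z : Set G) * A ∨ g ∈ A⁻¹ * A) :
    A⁻¹ * A = Set.univ := by
  have hZ : (Z : Set G) * A ⊆ A⁻¹ * A :=
    Set.mul_subset_mul_right fun z hz => hZA (Z.inv_mem hz)
  refine Set.eq_univ_of_forall fun g => ?_
  rcases hcover g with hg | hg | hg
  · exact hZ hg
  · simpa using Set.inv_mem_inv.2 (hZ hg)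
  · exact hg

lemma not_hasStrongCFS_of_normal_subset [Finite G] {Z : Subgroup G} [Z.Normal] {A : Set G} {m : ℕ}
    (hZA : (Z : Set G) ⊆ A) (hAm : A.ncard ≤ m) (hmG : m ∣ Nat.card G) (hm : m ≠ Nat.card G)
    (hcover : ∀ g, g ∈ (Z : Set G) * A ∨ g⁻¹ ∈ (Z : Set G) * A ∨ g ∈ A⁻¹ * A ∩ (A * A⁻¹)) :
    ¬HasStrongCFS G := by
  have hinv : (Z : Set G) * A⁻¹ = ((Z : Set G) * A)⁻¹ := by
    rw [mul_inv_rev, inv_coe_set, Z.set_mul_normal_comm]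
  refine not_hasStrongCFS_of_ncard_le hAm hmG hm ?_ ?_
  · exact inv_mul_self_eq_univ_of_subset hZA fun g =>
      (hcover g).imp_right (Or.imp_right And.left)
  · have hZA' : (Z : Set G) ⊆ A⁻¹ := by simpa using Set.inv_subset_inv.2 hZA
    simpa using inv_mul_self_eq_univ_of_subset hZA' fun g => by
      rw [hinv, Set.mem_inv, Set.mem_inv, inv_inv, inv_inv, or_left_comm]
      exact (hcover g).imp_right (Or.imp_right And.right)

end StrongCFS

section OddIndex

lemma exists_disjoint_inv_union_inv_eq (Q : Type*) [InvolutiveInv Q] :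
    ∃ T : Set Q, Disjoint T T⁻¹ ∧ T ∪ T⁻¹ = {q | q⁻¹ ≠ q} := by
  classical
  let _ : LinearOrder Q := linearOrderOfSTO WellOrderingRel
  refine ⟨{q | q⁻¹ < q}, ?_, ?_⟩
  · rw [Set.disjoint_left]
    intro q hq hq'
    simp only [Set.mem_ofPred_eq, Set.mem_inv, inv_inv] at hq hq'
    exact lt_asymm hq hq'
  · ext q
    simp [lt_or_lt_iff_ne]

lemma eq_one_of_inv_eq_self_of_odd_card {Q : Type*} [Group Q] (hQ : Odd (Nat.card Q)) {q : Q}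
    (hq : q⁻¹ = q) : q = 1 := by
  refine hQ.coprime_two_right.pow_left_bijective.injective ?_
  simp [pow_two, mul_eq_one_iff_inv_eq, hq]

variable {G : Type*} [Group G]

lemma not_hasStrongCFS_of_odd_index [Finite G] {Z : Subgroup G} [Z.Normal] (hZ : Z ≠ ⊥)
    (hodd : Odd Z.index) (hle : 2 * Nat.card Z ≤ Z.index) : ¬HasStrongCFS G := by
  obtain ⟨T, hdisj, hT⟩ := exists_disjoint_inv_union_inv_eq (G ⧸ Z)
  have hTcard : 2 * T.ncard ≤ Z.index := by
    have hunion := Set.ncard_union_eq hdisj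
    rw [Set.ncard_inv] at hunion
    have := Set.ncard_le_card (T ∪ T⁻¹)
    rw [Subgroup.index]
    omega
  have hAcard : ((Z : Set G) ∪ Quotient.out '' T).ncard ≤ Z.index := by
    have hunion := Set.ncard_union_le (Z : Set G) (Quotient.out '' T)
    have himage : (Quotient.out '' T).ncard ≤ T.ncard := Set.ncard_image_le
    have hZcard : (Z : Set G).ncard = Nat.card Z := rfl
    omega
  have hmem {g : G} (hg : (g : G ⧸ Z) ∈ T) :
      g ∈ (Z : Set G) * ((Z : Set G) ∪ Quotient.out '' T) := by
    obtain ⟨z, hz⟩ := QuotientGroup.mk_out_eq_mul Z g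
    rw [← Z.set_mul_normal_comm]
    exact ⟨g * z, .inr ⟨_, hg, hz⟩, (z : G)⁻¹, Z.inv_mem z.2, mul_inv_cancel_right g z⟩
  refine not_hasStrongCFS_of_normal_subset Set.subset_union_left hAcard Z.index_dvd_card ?_ ?_
  · have hmul := Z.card_mul_index
    have hone := Z.one_lt_card_iff_ne_bot.2 hZ
    have := Nat.card_pos (α := G)
    nlinarith
  · intro g
    by_cases hg : (g : G ⧸ Z)⁻¹ = g
    · have hgZ : g ∈ Z := (QuotientGroup.eq_one_iff g).1 (eq_one_of_inv_eq_self_of_odd_card hodd hg)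
      exact .inl ⟨g, hgZ, 1, .inl Z.one_mem, mul_one g⟩
    · have hgT : (g : G ⧸ Z) ∈ T ∪ T⁻¹ := hT ▸ hg
      exact hgT.elim (fun h => .inl (hmem h)) fun h => .inr (.inl (hmem h))

lemma exists_normal_card_eq_of_isPGroup [Finite G] [Nontrivial G] {p : ℕ} [Fact p.Prime]
    (hG : IsPGroup p G) : ∃ Z : Subgroup G, Z.Normal ∧ Nat.card Z = p := by
  obtain ⟨n, hn, hcenter⟩ :=
    (hG.to_subgroup (Subgroup.center G)).nontrivial_iff_card.1 hG.center_nontrivial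
  obtain ⟨Z, hZ, hcard⟩ := Sylow.exists_subgroup_le_card_pow_prime_of_le_card (n := 1)
    (Fact.out : p.Prime) hG (hcenter ▸ Nat.pow_le_pow_right (Fact.out : p.Prime).pos hn)
  have hnormal : Z.Normal :=
    ⟨fun z hz g => by rwa [Subgroup.mem_center_iff.1 (hZ hz) g, mul_inv_cancel_right]⟩
  exact ⟨Z, hnormal, hcard.trans (pow_one p)⟩

lemma not_hasStrongCFS_of_card_eq_odd_prime_pow {p n : ℕ} [Fact p.Prime] (hp2 : p ≠ 2)
    (hn : 3 ≤ n) (hG : Nat.card G = p ^ n) : ¬HasStrongCFS G := by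
  have hp : p.Prime := Fact.out
  obtain ⟨k, rfl⟩ := Nat.exists_eq_add_of_le' hn
  have : Finite G := Nat.finite_of_card_ne_zero (hG ▸ (pow_pos hp.pos _).ne')
  have : Nontrivial G :=
    Finite.one_lt_card_iff_nontrivial.1 (hG ▸ Nat.one_lt_pow (by omega) hp.one_lt)
  obtain ⟨Z, _, hZ⟩ := exists_normal_card_eq_of_isPGroup (IsPGroup.of_card hG)
  have hindex : Z.index = p ^ (k + 2) := by
    refine Nat.eq_of_mul_eq_mul_left hp.pos ?_
    rw [← pow_succ', ← hG, ← hZ, Z.card_mul_index]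
  refine not_hasStrongCFS_of_odd_index (Z := Z) (Z.one_lt_card_iff_ne_bot.1 (hZ ▸ hp.one_lt))
    (hindex ▸ (hp.odd_of_ne_two hp2).pow) ?_
  calc 2 * Nat.card Z ≤ p ^ 2 := by rw [hZ, pow_two]; exact Nat.mul_le_mul_right p hp.two_le
    _ ≤ Z.index := hindex ▸ Nat.pow_le_pow_right hp.pos (by omega)

end OddIndex

section OrderEight

variable {G : Type*} [Group G] {a : G}

lemma normal_zpowers_pow [(Subgroup.zpowers a).Normal] (n : ℕ) :
    (Subgroup.zpowers (a ^ n)).Normal := by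
  refine ⟨?_⟩
  rintro _ ⟨k, rfl⟩ g
  obtain ⟨j, hj⟩ := ‹(Subgroup.zpowers a).Normal›.conj_mem a (Subgroup.mem_zpowers a) g
  refine ⟨j * k, ?_⟩
  simp only at hj ⊢
  rw [← conj_zpow, ← conj_pow, ← hj]
  group

lemma mem_zpowers_sq_or_eq_or_eq_inv_of_orderOf_eq_four (ha : orderOf a = 4) {g : G}
    (hg : g ∈ Subgroup.zpowers a) : g ∈ Subgroup.zpowers (a ^ 2) ∨ g = a ∨ g = a⁻¹ := by
  classical
  have ha4 : a ^ 4 = 1 := ha ▸ pow_orderOf_eq_one a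
  rw [(orderOf_pos_iff.1 (ha ▸ four_pos)).mem_zpowers_iff_mem_range_orderOf, ha] at hg
  simp only [Finset.mem_image, Finset.mem_range] at hg
  obtain ⟨k, hk, rfl⟩ := hg
  interval_cases k
  · exact .inl (pow_zero a ▸ one_mem _)
  · exact .inr (.inl (pow_one a))
  · exact .inl (Subgroup.mem_zpowers _)
  · exact .inr (.inr (eq_inv_of_mul_eq_one_left (by rw [← pow_succ, ha4])))

lemma mem_inv_mul_inter_mul_inv_of_orderOf_eq_four [(Subgroup.zpowers a).Normal]
    (ha : orderOf a = 4) (t : G) {g : G} (hg : g ∈ Subgroup.zpowers a)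
    (hg2 : g ∉ Subgroup.zpowers (a ^ 2)) :
    g ∈ ({t, a * t} : Set G)⁻¹ * {t, a * t} ∩ (({t, a * t} : Set G) * ({t, a * t} : Set G)⁻¹) := by
  have ht : t ∈ ({t, a * t} : Set G) := .inl rfl
  have hat : a * t ∈ ({t, a * t} : Set G) := .inr rfl
  have hconj : t * g * t⁻¹ ∉ Subgroup.zpowers (a ^ 2) :=
    (normal_zpowers_pow 2).mem_comm_iff.not.2 (by simpa [mul_assoc] using hg2)
  constructor
  · rcases (mem_zpowers_sq_or_eq_or_eq_inv_of_orderOf_eq_four ha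
      (Subgroup.Normal.conj_mem ‹_› g hg t)).resolve_left hconj with h | h
    · exact ⟨t⁻¹, Set.inv_mem_inv.2 ht, a * t, hat, by rw [← h]; group⟩
    · exact ⟨(a * t)⁻¹, Set.inv_mem_inv.2 hat, t, ht, by rw [mul_inv_rev, ← h]; group⟩
  · rcases (mem_zpowers_sq_or_eq_or_eq_inv_of_orderOf_eq_four ha hg).resolve_left hg2 with
      rfl | rfl
    · exact ⟨g * t, hat, t⁻¹, Set.inv_mem_inv.2 ht, mul_inv_cancel_right g t⟩
    · exact ⟨t, ht, (a * t)⁻¹, Set.inv_mem_inv.2 hat, by simp⟩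

lemma mem_zpowers_sq_mul_of_orderOf_eq_four (ha : orderOf a = 4) {g t : G}
    (hgt : g * t⁻¹ ∈ Subgroup.zpowers a) :
    g ∈ (Subgroup.zpowers (a ^ 2) : Set G) * {t, a * t} := by
  rcases mem_zpowers_sq_or_eq_or_eq_inv_of_orderOf_eq_four ha hgt with h | h | h
  · exact ⟨g * t⁻¹, h, t, .inl rfl, inv_mul_cancel_right g t⟩
  · exact ⟨1, one_mem _, a * t, .inr rfl, by simp [← h]⟩
  · refine ⟨(a ^ 2)⁻¹, inv_mem (Subgroup.mem_zpowers _), a * t, .inr rfl, ?_⟩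
    rw [eq_mul_of_mul_inv_eq h]
    group

lemma not_hasStrongCFS_of_card_eq_eight (hG : Nat.card G = 8) (ha : orderOf a = 4) :
    ¬HasStrongCFS G := by
  have : Finite G := Nat.finite_of_card_ne_zero (by omega)
  have hindex : (Subgroup.zpowers a).index = 2 := by
    have := (Subgroup.zpowers a).card_mul_index
    rw [Nat.card_zpowers, ha, hG] at this
    omega
  have hnormal := Subgroup.normal_of_index_eq_two hindex
  have hnormal_sq := normal_zpowers_pow (a := a) 2
  obtain ⟨t, ht⟩ : ∃ t, t ∉ Subgroup.zpowers a := by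
    by_contra! hall
    rw [(Subgroup.eq_top_iff' _).2 hall, Subgroup.index_top] at hindex
    omega
  set Z := Subgroup.zpowers (a ^ 2)
  have hZcard : (Z : Set G).ncard = 2 := by
    rw [← Nat.card_coe_set_eq]
    simp [Z, orderOf_pow, ha]
  have hpair : ({t, a * t} : Set G).ncard ≤ 2 := (Set.ncard_insert_le _ _).trans (by simp)
  have hsub : ({t, a * t} : Set G) ⊆ Z ∪ {t, a * t} := Set.subset_union_right
  refine not_hasStrongCFS_of_normal_subset (Z := Z) (A := Z ∪ {t, a * t}) (m := 4)
    Set.subset_union_left ((Set.ncard_union_le _ _).trans (Nat.add_le_add hZcard.le hpair))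
    (by omega) (by omega) fun g => ?_
  by_cases hg : g ∈ Subgroup.zpowers a
  · by_cases hgZ : g ∈ Z
    · exact .inl ⟨g, hgZ, 1, .inl Z.one_mem, mul_one g⟩
    · obtain ⟨hl, hr⟩ := mem_inv_mul_inter_mul_inv_of_orderOf_eq_four ha t hg hgZ
      exact .inr (.inr ⟨Set.mul_subset_mul (Set.inv_subset_inv.2 hsub) hsub hl,
        Set.mul_subset_mul hsub (Set.inv_subset_inv.2 hsub) hr⟩)
  · have hgt : g * t⁻¹ ∈ Subgroup.zpowers a := by
      simp [Subgroup.mul_mem_iff_of_index_two hindex, hg, ht]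
    exact .inl (Set.mul_subset_mul_left hsub (mem_zpowers_sq_mul_of_orderOf_eq_four ha hgt))

lemma HasStrongCFS.orderOf_ne_four [Finite G] (h : HasStrongCFS G) (hG : 8 ∣ Nat.card G) (a : G) :
    orderOf a ≠ 4 := by
  intro ha
  obtain ⟨K, hK, hle⟩ := Sylow.exists_subgroup_card_pow_prime_le 2 (n := 2) (m := 3) hG
    (Subgroup.zpowers a) ((Nat.card_zpowers a).trans ha) (by omega)
  refine not_hasStrongCFS_of_card_eq_eight hK (a := ⟨a, hle (Subgroup.mem_zpowers a)⟩) ?_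
    (h.of_injective K.subtype_injective)
  rwa [Subgroup.orderOf_mk]

end OrderEight

section PGroups

variable {G : Type*} [Group G] {p : ℕ} [Fact p.Prime]

lemma isMulCommutative_of_card_dvd_prime_sq (hG : Nat.card G ∣ p ^ 2) : IsMulCommutative G := by
  obtain ⟨k, hk, hcard⟩ := (Nat.dvd_prime_pow Fact.out).1 hG
  rcases hk.lt_or_eq with hlt | rfl
  · have := isCyclic_of_card_dvd_prime (α := G) (p := p)
      (by simpa [hcard] using pow_dvd_pow p (Nat.lt_succ_iff.1 hlt))
    infer_instance
  · exact IsPGroup.isMulCommutative_of_card_eq_prime_sq hcard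

lemma orderOf_dvd_of_forall_orderOf_ne_sq (hG : IsPGroup p G) (h : ∀ a : G, orderOf a ≠ p ^ 2)
    (g : G) : orderOf g ∣ p := by
  obtain ⟨k, hk⟩ := IsPGroup.iff_orderOf.1 hG g
  rcases le_or_gt k 1 with hk1 | hk1
  · simpa [hk] using pow_dvd_pow p hk1
  · have hdvd : p ^ 2 ∣ orderOf g := hk ▸ pow_dvd_pow p hk1
    have hg : orderOf g ≠ 0 := hk ▸ (pow_pos (Fact.out : p.Prime).pos k).ne'
    exact (h _ (orderOf_pow_orderOf_div hg hdvd)).elim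

end PGroups

/-- No finite nonabelian group has the strong CFS property; equivalently, every finite
group with the strong CFS property is abelian. -/
theorem stmt_18 {G : Type*} [Group G] [Finite G] (h : HasStrongCFS G) :
    ∀ x y : G, x * y = y * x := by
  obtain ⟨p, hp, n, hn⟩ := h.exists_card_eq_prime_pow
  have : Fact p.Prime := ⟨hp⟩
  rcases le_or_gt n 2 with hn2 | hn3
  · exact (isMulCommutative_of_card_dvd_prime_sq (hn ▸ pow_dvd_pow p hn2)).is_comm.comm
  rcases eq_or_ne p 2 with rfl | hp2
  · exact Commute.of_orderOf_dvd_two <| orderOf_dvd_of_forall_orderOf_ne_sq (.of_card hn) <|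
      h.orderOf_ne_four (hn ▸ pow_dvd_pow 2 hn3)
  · exact (not_hasStrongCFS_of_card_eq_odd_prime_pow hp2 hn3 hn h).elim
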